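/- arXiv:2309.11788 — 2 statements merged into one kernel-verified Lean document; each statement's English description precedes it below -/
import Mathlib

section
/- Let p be a parking function of length n with MVP outcome π, and let S = Ψ_{PF→Sub}(p) be the associated 1-subgraph. Then the total MVP displacement of p equals the sum of the lengths of the edges of S: disp_MVP(p) = Σ_{(j,i) ∈ S} (i − j), where disp_MVP(p) = Σ_{i=1}^{n} |p_i − π^{-1}(i)| is the sum over all cars of the distance between the car's preferred spot and the spot where it finally parks. -/
/- Common definitions: the classical and MVP parking processes, parking
functions, inversion graphs and 1-subgraphs, Motzkin paths, and sandpile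
configurations on complete graphs. Spots, cars and vertices are 0-indexed
(element `i : Fin n` corresponds to the 1-indexed `i+1` of the paper). -/

namespace MVPPaper

open Finset

variable {n : ℕ}

/-- The first unoccupied spot `k ≥ s` in the occupancy `occ`, if any exists.
`occ k = some i` means spot `k` is occupied by car `i`. -/
def firstFree (occ : Fin n → Option (Fin n)) (s : Fin n) : Option (Fin n) :=
  (List.finRange n).find? fun k => decide (s ≤ k) && (occ k).isNone

/-- One step of the classical parking process: car `i`, preferring spot `s`,
parks in the first free spot `k ≥ s` (failure if none exists). -/
def classicalStep (occ : Fin n → Option (Fin n)) (i s : Fin n) :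
    Option (Fin n → Option (Fin n)) :=
  (firstFree occ s).map fun k => Function.update occ k (some i)

/-- One step of the MVP parking process: car `i` parks in its preferred spot
`s`; if `s` was occupied by an earlier car `j`, then `j` is bumped out and
drives on to the first free spot `k ≥ s` (failure if none exists). -/
def mvpStep (occ : Fin n → Option (Fin n)) (i s : Fin n) :
    Option (Fin n → Option (Fin n)) :=
  match occ s with
  | none => some (Function.update occ s (some i))
  | some j =>
      (firstFree (Function.update occ s (some i)) s).map fun k =>
        Function.update (Function.update occ s (some i)) k (some j)

/-- Run a parking process: cars `0, 1, …, n-1` enter in order, with car `i`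
preferring spot `p i`. Returns the final occupancy, or `none` on failure. -/
def runProcess
    (step : (Fin n → Option (Fin n)) → Fin n → Fin n → Option (Fin n → Option (Fin n)))
    (p : Fin n → Fin n) : Option (Fin n → Option (Fin n)) :=
  List.foldlM (fun occ i => step occ i (p i)) (fun _ => none) (List.finRange n)

def mvpRun (p : Fin n → Fin n) : Option (Fin n → Option (Fin n)) :=
  runProcess mvpStep p

def classicalRun (p : Fin n → Fin n) : Option (Fin n → Option (Fin n)) :=
  runProcess classicalStep p

/-- All cars park successfully under the MVP process. -/
def IsMVPParking (p : Fin n → Fin n) : Prop := (mvpRun p).isSome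

/-- All cars park successfully under the classical process. -/
def IsClassicalParking (p : Fin n → Fin n) : Prop := (classicalRun p).isSome

/-- `MVPOutcome p π` means that the MVP parking process for `p` succeeds, and
car `π i` finally occupies spot `i` for all `i`; that is, `O_MVP(p) = π`. -/
def MVPOutcome (p : Fin n → Fin n) (π : Equiv.Perm (Fin n)) : Prop :=
  ∃ occ, mvpRun p = some occ ∧ ∀ i, occ i = some (π i)

/-- `p` is a parking function: for every `k`, at least `k+1` cars prefer a spot
`≤ k` (the classical counting characterisation, 0-indexed). -/
def IsParkingFunction (p : Fin n → Fin n) : Prop :=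
  ∀ k : Fin n, (k : ℕ) + 1 ≤ (univ.filter fun i => p i ≤ k).card

/-- The fibre of the MVP outcome map over `π`: parking functions with MVP
outcome `π`. -/
def FibMVP (π : Equiv.Perm (Fin n)) : Set (Fin n → Fin n) :=
  {p | IsParkingFunction p ∧ MVPOutcome p π}

/-- The set of inversions of `π` (where `π i` is the car occupying spot `i`):
pairs `(j, i)` with `j < i` and `π j > π i`. These are the edges of the
inversion graph `G_π`. -/
def invFinset (π : Equiv.Perm (Fin n)) : Finset (Fin n × Fin n) :=
  univ.filter fun e => e.1 < e.2 ∧ π e.2 < π e.1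

/-- The left-inversions of `π` at `i`. -/
def lInv (π : Equiv.Perm (Fin n)) (i : Fin n) : Finset (Fin n) :=
  univ.filter fun j => j < i ∧ π i < π j

/-- A 1-subgraph of the inversion graph of `π`: a set of inversions with at
most one incident left-arc at each vertex. -/
def IsOneSubgraph (π : Equiv.Perm (Fin n)) (S : Finset (Fin n × Fin n)) : Prop :=
  S ⊆ invFinset π ∧ ∀ i j j' : Fin n, (j, i) ∈ S → (j', i) ∈ S → j = j'

/-- The map `Ψ_{Sub→PF}`: the parking preference `p` where `p (π i) = j` if
`(j, i) ∈ S` (for the unique such `j`), and `p (π i) = i` otherwise. -/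
noncomputable def subToPF (π : Equiv.Perm (Fin n)) (S : Finset (Fin n × Fin n)) :
    Fin n → Fin n := fun c =>
  if h : ∃ j, (j, π.symm c) ∈ S then h.choose else π.symm c

/-- The map `Ψ_{PF→Sub}`: the set of inversions `(j, i)` of `π` with
`p (π i) = j`. -/
def pfToSub (π : Equiv.Perm (Fin n)) (p : Fin n → Fin n) : Finset (Fin n × Fin n) :=
  (invFinset π).filter fun e => p (π e.2) = e.1

/-- A 1-subgraph `S` is valid if the MVP outcome of `Ψ_{Sub→PF}(S)` is `π`. -/
def IsValid (π : Equiv.Perm (Fin n)) (S : Finset (Fin n × Fin n)) : Prop :=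
  MVPOutcome (subToPF π S) π

/-- `π` contains the pattern `321`. -/
def Contains321 (π : Equiv.Perm (Fin n)) : Prop :=
  ∃ i j k : Fin n, i < j ∧ j < k ∧ π k < π j ∧ π j < π i

/-- `π` contains the pattern `3412`. -/
def Contains3412 (π : Equiv.Perm (Fin n)) : Prop :=
  ∃ i j k l : Fin n, i < j ∧ j < k ∧ k < l ∧ π k < π l ∧ π l < π i ∧ π i < π j

/-- `S` is `P⃗₂`-free: there is no triple `i < j < k` with `(i,j) ∈ S` and
`(j,k) ∈ S`. -/
def P2Free (S : Finset (Fin n × Fin n)) : Prop :=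
  ¬∃ i j k : Fin n, i < j ∧ j < k ∧ (i, j) ∈ S ∧ (j, k) ∈ S

/-- `S` is horizontally separated (HS): any two distinct edges `(j,i)` and
`(j',i')` of `S` satisfy `i < j'` or `i' < j`. -/
def IsHS (S : Finset (Fin n × Fin n)) : Prop :=
  ∀ e ∈ S, ∀ e' ∈ S, e ≠ e' → e.2 < e'.1 ∨ e'.2 < e.1

/-- Steps of a Motzkin path: up, horizontal, down. -/
inductive MStep : Type
  | U : MStep
  | H : MStep
  | D : MStep
  deriving DecidableEq

/-- The height change of a step. -/
def stepVal : MStep → ℤ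
  | MStep.U => 1
  | MStep.H => 0
  | MStep.D => -1

/-- The number of cars preferring spot `j` in `p`. -/
def prefCount (p : Fin n → Fin n) (j : Fin n) : ℕ :=
  (univ.filter fun i => p i = j).card

/-- The lattice path `Φ(p)`: step `j` is `U`, `H` or `D` according to whether
spot `j` is preferred by at least two, exactly one, or no cars. -/
def Phi (p : Fin n → Fin n) : Fin n → MStep := fun j =>
  if 2 ≤ prefCount p j then MStep.U
  else if prefCount p j = 1 then MStep.H
  else MStep.D

/-- An `n`-step lattice path is a Motzkin path: it ends at height `0` and no
prefix goes below height `0`. -/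
def IsMotzkinPath (φ : Fin n → MStep) : Prop :=
  (∑ j : Fin n, stepVal (φ j)) = 0 ∧
  ∀ k : Fin n, 0 ≤ ∑ j ∈ univ.filter (fun j : Fin n => j ≤ k), stepVal (φ j)

/-- The decreasing permutation `dec_n = n(n-1)⋯1`: spot `i` gets car `n-1-i`
(0-indexed). -/
def decPerm (n : ℕ) : Equiv.Perm (Fin n) :=
  ⟨Fin.rev, Fin.rev, Fin.rev_rev, Fin.rev_rev⟩

/-- A non-crossing matching arc diagram on `{0, …, n-1}`: arcs go left to
right, each vertex is incident to at most one arc, and no two arcs cross. -/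
def IsNonCrossMatching (S : Finset (Fin n × Fin n)) : Prop :=
  (∀ e ∈ S, e.1 < e.2) ∧
  (∀ e ∈ S, ∀ e' ∈ S, e ≠ e' →
    e.1 ≠ e'.1 ∧ e.1 ≠ e'.2 ∧ e.2 ≠ e'.1 ∧ e.2 ≠ e'.2) ∧
  ¬∃ i j k l : Fin n, i < j ∧ j < k ∧ k < l ∧ (i, k) ∈ S ∧ (j, l) ∈ S

/-- A stable configuration `c` (grain counts, each `< n`) on the complete graph
`K_n` is recurrent; by Dhar's burning criterion this amounts on `K_n` to the
existence of an ordering `v` of the vertices with `c (v k) ≥ n - (k+1)` for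
every `k` (0-indexed). -/
def IsRecurrentK (c : Fin n → ℕ) : Prop :=
  (∀ i, c i < n) ∧ ∃ v : Equiv.Perm (Fin n), ∀ k : Fin n, n ≤ c (v k) + (k : ℕ) + 1

/-! A displaced car always stands to the right of its preferred spot, and that spot is held by a
later car: the car that bumped it took the spot, and only still later cars can take it over. Hence
the displaced cars are exactly those at the right endpoints of the edges of `Ψ_{PF→Sub}(p)`, each
edge being as long as the displacement of its car. -/

theorem foldlM_option_induction {α β : Type*} {f : β → α → Option β} {l : List α}
    {motive : ℕ → β → Prop} {b b' : β} (hfold : l.foldlM f b = some b') (zero : motive 0 b)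
    (succ : ∀ (k : ℕ) (hk : k < l.length) (b b' : β),
      motive k b → f b l[k] = some b' → motive (k + 1) b') :
    motive l.length b' := by
  induction l generalizing b motive with
  | nil =>
    obtain rfl : b = b' := by simpa using hfold
    exact zero
  | cons a l ih =>
    rw [List.foldlM_cons] at hfold
    obtain ⟨b₁, hstep, hrest⟩ := Option.bind_eq_some_iff.mp hfold
    refine ih (motive := fun k => motive (k + 1)) hrest
      (succ 0 (Nat.succ_pos _) b b₁ zero hstep) fun k hk => ?_
    exact succ (k + 1) (Nat.succ_lt_succ hk)

theorem runProcess_induction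
    {step : (Fin n → Option (Fin n)) → Fin n → Fin n → Option (Fin n → Option (Fin n))}
    {p : Fin n → Fin n} {motive : ℕ → (Fin n → Option (Fin n)) → Prop}
    {occ : Fin n → Option (Fin n)} (hrun : runProcess step p = some occ)
    (zero : motive 0 fun _ => none)
    (succ : ∀ (i : Fin n) (occ occ' : Fin n → Option (Fin n)),
      motive i occ → step occ i (p i) = some occ' → motive (i + 1) occ') :
    motive n occ := by
  rw [← List.length_finRange (n := n)]
  refine foldlM_option_induction hrun zero fun k hk b b' hb hstep => ?_
  rw [List.getElem_finRange] at hstep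
  exact succ _ b b' hb hstep

theorem firstFree_eq_some {occ : Fin n → Option (Fin n)} {s k : Fin n}
    (h : firstFree occ s = some k) : s ≤ k ∧ occ k = none := by
  simpa using List.find?_some h

theorem mvpStep_eq_some {occ occ' : Fin n → Option (Fin n)} {i s : Fin n}
    (h : mvpStep occ i s = some occ') :
    (occ s = none ∧ occ' = Function.update occ s (some i)) ∨
      ∃ j k, occ s = some j ∧ s < k ∧ Function.update occ s (some i) k = none ∧
        occ' = Function.update (Function.update occ s (some i)) k (some j) := by
  unfold mvpStep at h
  split at h
  case h_1 hs => exact .inl ⟨hs, (Option.some.inj h).symm⟩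
  case h_2 j hs =>
    obtain ⟨k, hfree, rfl⟩ := Option.map_eq_some_iff.mp h
    obtain ⟨hle, hnone⟩ := firstFree_eq_some hfree
    have hne : s ≠ k := by
      rintro rfl
      simp at hnone
    exact .inr ⟨j, k, hs, lt_of_le_of_ne hle hne, hnone, rfl⟩

/-- Car `c`, when standing in spot `k` of the occupancy `occ`, is beyond its preferred spot, and
that spot is occupied by a car which entered later. -/
def IsBumped (p : Fin n → Fin n) (occ : Fin n → Option (Fin n)) (k c : Fin n) : Prop :=
  p c < k ∧ ∃ d, occ (p c) = some d ∧ c < d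

/-- The invariant of the MVP process after the cars `0, …, t - 1` have entered: only these cars are
parked, and each of them stands in its preferred spot or has been bumped. -/
structure IsMVPState (p : Fin n → Fin n) (t : ℕ) (occ : Fin n → Option (Fin n)) : Prop where
  lt : ∀ {k c : Fin n}, occ k = some c → (c : ℕ) < t
  eq_or_isBumped : ∀ {k c : Fin n}, occ k = some c → p c = k ∨ IsBumped p occ k c

section Invariant

variable {p : Fin n → Fin n} {occ occ' : Fin n → Option (Fin n)}

theorem IsBumped.update_of_lt {k c s i : Fin n} (h : IsBumped p occ k c) (hci : c < i) :
    IsBumped p (Function.update occ s (some i)) k c := by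
  obtain ⟨hlt, d, hd, hcd⟩ := h
  refine ⟨hlt, ?_⟩
  by_cases hs : p c = s
  · exact ⟨i, by rw [hs, Function.update_self], hci⟩
  · exact ⟨d, by rwa [Function.update_of_ne hs], hcd⟩

theorem IsBumped.update_of_eq_none {k c s : Fin n} {o : Option (Fin n)} (h : IsBumped p occ k c)
    (hs : occ s = none) : IsBumped p (Function.update occ s o) k c := by
  obtain ⟨hlt, d, hd, hcd⟩ := h
  have hne : p c ≠ s := by
    rintro rfl
    simp [hs] at hd
  exact ⟨hlt, d, by rwa [Function.update_of_ne hne], hcd⟩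

theorem isMVPState_zero : IsMVPState p 0 fun _ => none where
  lt h := nomatch h
  eq_or_isBumped h := nomatch h

/-- The occupant of `p i`, if any, disappears here; the bumped car is put back by
`IsMVPState.update_of_eq_none`. -/
theorem IsMVPState.update_preferred {i : Fin n} (h : IsMVPState p i occ) :
    IsMVPState p (i + 1) (Function.update occ (p i) (some i)) where
  lt {k c} hk := by
    by_cases hki : k = p i
    · subst hki
      obtain rfl : i = c := by simpa using hk
      exact Nat.lt_succ_self _
    · rw [Function.update_of_ne hki] at hk
      exact (h.lt hk).trans (Nat.lt_succ_self _)
  eq_or_isBumped {k c} hk := by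
    by_cases hki : k = p i
    · subst hki
      obtain rfl : i = c := by simpa using hk
      exact .inl rfl
    · rw [Function.update_of_ne hki] at hk
      exact (h.eq_or_isBumped hk).imp_right fun hb => hb.update_of_lt (h.lt hk)

theorem IsMVPState.update_of_eq_none {t : ℕ} {k j : Fin n} (h : IsMVPState p t occ)
    (hk : occ k = none) (hjt : (j : ℕ) < t) (hj : IsBumped p occ k j) :
    IsMVPState p t (Function.update occ k (some j)) where
  lt {m c} hm := by
    by_cases hmk : m = k
    · subst hmk
      obtain rfl : j = c := by simpa using hm
      exact hjt
    · rw [Function.update_of_ne hmk] at hm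
      exact h.lt hm
  eq_or_isBumped {m c} hm := by
    by_cases hmk : m = k
    · subst hmk
      obtain rfl : j = c := by simpa using hm
      exact .inr (hj.update_of_eq_none hk)
    · rw [Function.update_of_ne hmk] at hm
      exact (h.eq_or_isBumped hm).imp_right fun hb => hb.update_of_eq_none hk

theorem IsMVPState.isBumped_of_lt {i j k : Fin n} (h : IsMVPState p i occ)
    (hj : occ (p i) = some j) (hk : p i < k) :
    IsBumped p (Function.update occ (p i) (some i)) k j := by
  have hji : j < i := h.lt hj
  rcases h.eq_or_isBumped hj with heq | hb
  · exact ⟨heq ▸ hk, i, by rw [heq, Function.update_self], hji⟩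
  · exact ⟨hb.1.trans hk, (hb.update_of_lt hji).2⟩

theorem IsMVPState.mvpStep {i : Fin n} (h : IsMVPState p i occ)
    (hstep : mvpStep occ i (p i) = some occ') : IsMVPState p (i + 1) occ' := by
  rcases mvpStep_eq_some hstep with ⟨-, rfl⟩ | ⟨j, k, hj, hlt, hfree, rfl⟩
  · exact h.update_preferred
  · exact h.update_preferred.update_of_eq_none hfree ((h.lt hj).trans (Nat.lt_succ_self _))
      (h.isBumped_of_lt hj hlt)

theorem isMVPState_of_mvpRun_eq_some (hrun : mvpRun p = some occ) : IsMVPState p n occ :=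
  runProcess_induction hrun isMVPState_zero fun _ _ _ h hstep => h.mvpStep hstep

end Invariant

section Outcome

variable {p : Fin n → Fin n} {π : Equiv.Perm (Fin n)}

theorem MVPOutcome.eq_or_mem_invFinset (hout : MVPOutcome p π) (i : Fin n) :
    p (π i) = i ∨ (p (π i), i) ∈ invFinset π := by
  obtain ⟨occ, hrun, hocc⟩ := hout
  refine ((isMVPState_of_mvpRun_eq_some hrun).eq_or_isBumped (hocc i)).imp_right ?_
  rintro ⟨hlt, d, hd, hid⟩
  obtain rfl : π (p (π i)) = d := Option.some.inj ((hocc _).symm.trans hd)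
  simpa [invFinset] using ⟨hlt, hid⟩

theorem MVPOutcome.preferred_le (hout : MVPOutcome p π) (i : Fin n) : p (π i) ≤ i := by
  rcases hout.eq_or_mem_invFinset i with heq | hmem
  · exact heq.le
  · exact (mem_filter.mp hmem).2.1.le

theorem MVPOutcome.pfToSub_eq_image (hout : MVPOutcome p π) :
    pfToSub π p = (univ.filter fun i => p (π i) ≠ i).image fun i => (p (π i), i) := by
  ext ⟨j, i⟩
  simp only [pfToSub, mem_filter, mem_image, mem_univ, true_and, Prod.mk.injEq]
  constructor
  · rintro ⟨hinv, rfl⟩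
    exact ⟨i, (mem_filter.mp hinv).2.1.ne, rfl, rfl⟩
  · rintro ⟨i, hne, rfl, rfl⟩
    exact ⟨(hout.eq_or_mem_invFinset i).resolve_left hne, rfl⟩

theorem MVPOutcome.sum_pfToSub {M : Type*} [AddCommMonoid M] (hout : MVPOutcome p π)
    (f : Fin n × Fin n → M) :
    ∑ e ∈ pfToSub π p, f e = ∑ i with p (π i) ≠ i, f (p (π i), i) := by
  rw [hout.pfToSub_eq_image, sum_image fun _ _ _ _ h => congrArg Prod.snd h]

end Outcome

/-- the MVP displacement of a parking function equals the sum of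
the edge lengths of the associated 1-subgraph `Ψ_{PF→Sub}(p)`. -/
theorem statement4 (n : ℕ) (p : Fin n → Fin n) (π : Equiv.Perm (Fin n))
    (hp : IsParkingFunction p) (hout : MVPOutcome p π) :
    ∑ i : Fin n, (((p i : ℕ) : ℤ) - ((π.symm i : ℕ) : ℤ)).natAbs =
      ∑ e ∈ pfToSub π p, ((e.2 : ℕ) - (e.1 : ℕ)) := by
  calc ∑ i : Fin n, (((p i : ℕ) : ℤ) - ((π.symm i : ℕ) : ℤ)).natAbs
      = ∑ i : Fin n, ((i : ℕ) - (p (π i) : ℕ)) := by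
        rw [← Equiv.sum_comp π]
        refine sum_congr rfl fun i _ => ?_
        have hle : p (π i) ≤ i := hout.preferred_le i
        rw [Equiv.symm_apply_apply]
        omega
    _ = ∑ i with p (π i) ≠ i, ((i : ℕ) - (p (π i) : ℕ)) := by
        symm
        refine sum_filter_of_ne fun i _ hsub heq => hsub ?_
        rw [heq, Nat.sub_self]
    _ = ∑ e ∈ pfToSub π p, ((e.2 : ℕ) - (e.1 : ℕ)) :=
        (hout.sum_pfToSub fun e => (e.2 : ℕ) - (e.1 : ℕ)).symm

end MVPPaper
end

section
/- Let π ∈ S_n and let S be a 1-subgraph of the inversion graph G_π. If S is valid then S is P⃗₂-free, i.e., there is no triple i < j < k with both (i,j) ∈ S and (j,k) ∈ S. Consequently, |Fib_n(π)| ≤ |{S ∈ Sub(π) : S is P⃗₂-free}|. -/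
/- Common definitions: the classical and MVP parking processes, parking
functions, inversion graphs and 1-subgraphs, Motzkin paths, and sandpile
configurations on complete graphs. Spots, cars and vertices are 0-indexed
(element `i : Fin n` corresponds to the 1-indexed `i+1` of the paper). -/

namespace MVPPaper

open Finset

variable {n : ℕ}

/- In the MVP process a spot preferred by some car that has already entered holds the latest such
car: newcomers take their preferred spot, and bumped cars only move to spots which nobody has
preferred so far. Hence in an outcome `π`, as soon as some car prefers spot `j`, so does the
occupant `π j`. Two consecutive arcs `(i, j)`, `(j, k)` would mean that `π k` prefers `j` while
`π j` prefers `i < j`. The bound on the fibre follows because a parking preference can be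
recovered from its outcome and the arcs it induces. -/

section ParkingProcess

variable {p : Fin n → Fin n} {A : Set (Fin n)} {occ occ' : Fin n → Option (Fin n)}

/-- The invariant of the MVP process with preferences `p`: `occ` is an occupancy of spots by
entered cars, `A` being the set of these, in which no car is parked before its preferred spot and
the spots preferred by entered cars are held by the latest cars preferring them. -/
structure IsMVPState_s5 (p : Fin n → Fin n) (A : Set (Fin n)) (occ : Fin n → Option (Fin n)) :
    Prop where
  exists_latest : ∀ c ∈ A, ∃ d, occ (p c) = some d ∧ c ≤ d ∧ p d = p c
  mem : ∀ {s b}, occ s = some b → b ∈ A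
  pref_le : ∀ {s b}, occ s = some b → p b ≤ s

theorem isMVPState_empty (p : Fin n → Fin n) : IsMVPState_s5 p ∅ fun _ => none where
  exists_latest _ hc := hc.elim
  mem h := nomatch h
  pref_le h := nomatch h

theorem IsMVPState_s5.park {i : Fin n} (h : IsMVPState_s5 p A occ) (hi : ∀ c ∈ A, c ≤ i) :
    IsMVPState_s5 p (insert i A) (Function.update occ (p i) (some i)) where
  exists_latest c hc := by
    by_cases hpc : p c = p i
    · exact ⟨i, by rw [hpc, Function.update_self], hc.elim le_of_eq (hi c), hpc.symm⟩
    · rw [Function.update_of_ne hpc]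
      exact h.exists_latest c (hc.resolve_left fun hci => hpc (congrArg p hci))
  mem {s b} hb := by
    rcases eq_or_ne s (p i) with rfl | hs
    · rw [Function.update_self, Option.some_inj] at hb
      exact .inl hb.symm
    · rw [Function.update_of_ne hs] at hb
      exact .inr (h.mem hb)
  pref_le {s b} hb := by
    rcases eq_or_ne s (p i) with rfl | hs
    · rw [Function.update_self, Option.some_inj] at hb
      rw [hb]
    · rw [Function.update_of_ne hs] at hb
      exact h.pref_le hb

theorem IsMVPState_s5.bump {j k : Fin n} (h : IsMVPState_s5 p A occ) (hk : occ k = none) (hj : j ∈ A)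
    (hjk : p j ≤ k) : IsMVPState_s5 p A (Function.update occ k (some j)) where
  exists_latest c hc := by
    obtain ⟨d, hd, hcd⟩ := h.exists_latest c hc
    have hne : p c ≠ k := by rintro rfl; simp [hk] at hd
    exact ⟨d, by rwa [Function.update_of_ne hne], hcd⟩
  mem {s b} hb := by
    rcases eq_or_ne s k with rfl | hs
    · rw [Function.update_self, Option.some_inj] at hb
      exact hb ▸ hj
    · rw [Function.update_of_ne hs] at hb
      exact h.mem hb
  pref_le {s b} hb := by
    rcases eq_or_ne s k with rfl | hs
    · rw [Function.update_self, Option.some_inj] at hb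
      exact hb ▸ hjk
    · rw [Function.update_of_ne hs] at hb
      exact h.pref_le hb

theorem le_and_eq_none_of_firstFree_eq_some {s k : Fin n} (h : firstFree occ s = some k) :
    s ≤ k ∧ occ k = none := by
  simpa using List.find?_some h

theorem IsMVPState_s5.step {i : Fin n} (h : IsMVPState_s5 p A occ) (hi : ∀ c ∈ A, c ≤ i)
    (hstep : mvpStep occ i (p i) = some occ') : IsMVPState_s5 p (insert i A) occ' := by
  unfold mvpStep at hstep
  split at hstep
  case h_1 =>
    cases hstep
    exact h.park hi
  case h_2 j hj =>
    obtain ⟨k, hk, rfl⟩ := Option.map_eq_some_iff.1 hstep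
    obtain ⟨hik, hfree⟩ := le_and_eq_none_of_firstFree_eq_some hk
    exact (h.park hi).bump hfree (.inr (h.mem hj)) ((h.pref_le hj).trans hik)

theorem isMVPState_of_foldlM_mvpStep {l : List (Fin n)} (hl : l.Pairwise (· ≤ ·))
    (hrun : l.foldlM (fun occ i => mvpStep occ i (p i)) (fun _ => none) = some occ) :
    IsMVPState_s5 p {c | c ∈ l} occ := by
  induction l using List.reverseRecOn generalizing occ with
  | nil =>
    cases hrun
    simpa using isMVPState_empty p
  | append_singleton l i ih =>
    obtain ⟨hl, -, hi⟩ := List.pairwise_append.1 hl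
    rw [List.foldlM_append] at hrun
    obtain ⟨occ₁, hrun₁, hstep⟩ := Option.bind_eq_some_iff.1 hrun
    have hcars : {c | c ∈ l ++ [i]} = insert i {c | c ∈ l} := by ext; simp [or_comm]
    rw [hcars]
    exact (ih hl hrun₁).step (fun c hc => hi c hc i (by simp)) (by simpa using hstep)

theorem isMVPState_of_mvpRun (hrun : mvpRun p = some occ) : IsMVPState_s5 p Set.univ occ := by
  simpa using isMVPState_of_foldlM_mvpStep (List.pairwise_le_finRange n) hrun

end ParkingProcess

section Outcome

variable {p : Fin n → Fin n} {π : Equiv.Perm (Fin n)}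

theorem MVPOutcome.isMVPState (h : MVPOutcome p π) :
    IsMVPState_s5 p Set.univ fun i => some (π i) := by
  obtain ⟨occ, hrun, hocc⟩ := h
  rw [← funext hocc]
  exact isMVPState_of_mvpRun hrun

theorem MVPOutcome.le_occupant (h : MVPOutcome p π) (c : Fin n) : c ≤ π (p c) := by
  obtain ⟨d, hd, hcd, -⟩ := h.isMVPState.exists_latest c trivial
  rwa [Option.some_inj.1 hd]

theorem MVPOutcome.pref_occupant (h : MVPOutcome p π) (c : Fin n) : p (π (p c)) = p c := by
  obtain ⟨d, hd, -, hpd⟩ := h.isMVPState.exists_latest c trivial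
  rwa [Option.some_inj.1 hd]

theorem MVPOutcome.pref_le (h : MVPOutcome p π) (i : Fin n) : p (π i) ≤ i :=
  h.isMVPState.pref_le rfl

theorem mem_invFinset {i j : Fin n} : (j, i) ∈ invFinset π ↔ j < i ∧ π i < π j := by
  simp [invFinset]

theorem mem_pfToSub {i j : Fin n} :
    (j, i) ∈ pfToSub π p ↔ (j, i) ∈ invFinset π ∧ p (π i) = j := by
  simp [pfToSub]

theorem MVPOutcome.pref_eq_or_mem_invFinset (h : MVPOutcome p π) (i : Fin n) :
    p (π i) = i ∨ (p (π i), i) ∈ invFinset π := by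
  refine or_iff_not_imp_left.2 fun hi => mem_invFinset.2 ⟨(h.pref_le i).lt_of_ne hi, ?_⟩
  exact (h.le_occupant (π i)).lt_of_ne (π.injective.ne (Ne.symm hi))

theorem isOneSubgraph_pfToSub (π : Equiv.Perm (Fin n)) (p : Fin n → Fin n) :
    IsOneSubgraph π (pfToSub π p) :=
  ⟨filter_subset _ _, fun _ _ _ h h' => (mem_pfToSub.1 h).2.symm.trans (mem_pfToSub.1 h').2⟩

theorem MVPOutcome.p2Free_pfToSub (h : MVPOutcome p π) : P2Free (pfToSub π p) := by
  rintro ⟨i, j, k, hij, -, hij_mem, hjk_mem⟩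
  have hpj : p (π j) = i := (mem_pfToSub.1 hij_mem).2
  have hpk : p (π k) = j := (mem_pfToSub.1 hjk_mem).2
  have hpj' : p (π j) = j := by simpa only [hpk] using h.pref_occupant (π k)
  exact hij.ne (hpj.symm.trans hpj')

end Outcome

section Subgraphs

variable {π : Equiv.Perm (Fin n)} {S : Finset (Fin n × Fin n)} {i j : Fin n}

theorem subToPF_apply_mem (h : ∃ j, (j, i) ∈ S) : (subToPF π S (π i), i) ∈ S := by
  simpa [subToPF, h] using h.choose_spec

theorem subToPF_apply_eq_self (h : ∀ j, (j, i) ∉ S) : subToPF π S (π i) = i := by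
  simp [subToPF, h]

theorem IsOneSubgraph.subToPF_apply (hS : IsOneSubgraph π S) (h : (j, i) ∈ S) :
    subToPF π S (π i) = j :=
  hS.2 i _ _ (subToPF_apply_mem ⟨j, h⟩) h

theorem IsOneSubgraph.pfToSub_subToPF (hS : IsOneSubgraph π S) :
    pfToSub π (subToPF π S) = S := by
  ext ⟨j, i⟩
  rw [mem_pfToSub]
  refine ⟨fun ⟨hinv, hpref⟩ => ?_, fun h => ⟨hS.1 h, hS.subToPF_apply h⟩⟩
  subst hpref
  refine subToPF_apply_mem ?_
  by_contra! hnone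
  exact (mem_invFinset.1 hinv).1.ne (subToPF_apply_eq_self hnone)

theorem subToPF_pfToSub {p : Fin n → Fin n}
    (hp : ∀ i, p (π i) = i ∨ (p (π i), i) ∈ invFinset π) : subToPF π (pfToSub π p) = p := by
  funext c
  obtain ⟨i, rfl⟩ := π.surjective c
  rcases hp i with hi | hi
  · rw [hi]
    refine subToPF_apply_eq_self fun j hj => ?_
    obtain ⟨hinv, hpref⟩ := mem_pfToSub.1 hj
    exact (mem_invFinset.1 hinv).1.ne (hpref.symm.trans hi)
  · exact (isOneSubgraph_pfToSub π p).subToPF_apply (mem_pfToSub.2 ⟨hi, rfl⟩)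

end Subgraphs

/-- every valid 1-subgraph is `P⃗₂`-free; consequently
`|Fib_n(π)|` is at most the number of `P⃗₂`-free 1-subgraphs. -/
theorem statement5 (n : ℕ) (π : Equiv.Perm (Fin n)) :
    (∀ S : Finset (Fin n × Fin n), IsOneSubgraph π S → IsValid π S → P2Free S) ∧
    (FibMVP π).ncard ≤
      {S : Finset (Fin n × Fin n) | IsOneSubgraph π S ∧ P2Free S}.ncard := by
  constructor
  · intro S hS hvalid
    rw [← hS.pfToSub_subToPF]
    exact MVPOutcome.p2Free_pfToSub hvalid
  · have hmaps : Set.MapsTo (pfToSub π) (FibMVP π) {S | IsOneSubgraph π S ∧ P2Free S} :=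
      fun p hp => ⟨isOneSubgraph_pfToSub π p, hp.2.p2Free_pfToSub⟩
    have hinv : Set.LeftInvOn (subToPF π) (pfToSub π) (FibMVP π) :=
      fun p hp => subToPF_pfToSub hp.2.pref_eq_or_mem_invFinset
    exact Set.ncard_le_ncard_of_injOn (pfToSub π) hmaps hinv.injOn

end MVPPaper
end
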